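/- arXiv:math/0209126 — 3 statements merged into one kernel-verified Lean document; each statement's English description precedes it below -/
import Mathlib

section
/- Let μ ∈ π_n be an (r−1)-slim partition, let g be a symmetric polynomial in ℂ[x_1,…,x_n] with highest partition μ, and assume n > k. Then for any nonzero complex number c there exist s_1, …, s_{k+1} ∈ {0, 1, …, r−2} such that the polynomial g(c q^{s_1}, c t q^{s_2}, c t² q^{s_3}, …, c t^k q^{s_{k+1}}, x_{k+2}, …, x_n) in the remaining variables x_{k+2},…,x_n is not identically zero. -/
open MvPolynomial

/-- `l` is an `(r-1)`-slim partition of length at most `n`: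
consecutive differences are `< r-1` and the last part is `< r-1`. -/
def IsSlim (r n : ℕ) (l : Fin n → ℕ) : Prop :=
  (∀ i : Fin n, ∀ h : (i : ℕ) + 1 < n, l i - l ⟨(i : ℕ) + 1, h⟩ < r - 1) ∧
  (∀ i : Fin n, (i : ℕ) = n - 1 → l i < r - 1)

/-- The monomial symmetric polynomial `m_λ`: the sum of the distinct monomials obtained
from `x^λ` by permuting the variables. -/
noncomputable def msym (n : ℕ) (l : Fin n → ℕ) : MvPolynomial (Fin n) ℂ :=
  ∑ a ∈ Finset.image (fun w : Equiv.Perm (Fin n) => l ∘ w) Finset.univ,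
    MvPolynomial.monomial (Finsupp.equivFunOnFinite.symm a) (1 : ℂ)

/-- Strict dominance order on partitions of equal weight:
`a < b` iff `a ≠ b`, `|a| = |b|` and all partial sums of `a` are at most those of `b`. -/
def DomLT (n : ℕ) (a b : Fin n → ℕ) : Prop :=
  a ≠ b ∧ (∑ i, a i = ∑ i, b i) ∧
  ∀ i : Fin n, ∑ j ∈ Finset.univ.filter (· ≤ i), a j
    ≤ ∑ j ∈ Finset.univ.filter (· ≤ i), b j

/-- `g` is a symmetric polynomial with highest partition `μ`:
`g = c_μ m_μ + Σ_{ν < μ} c_ν m_ν` with `c_μ ≠ 0` (`<` the dominance order). -/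
def HighestPartition (n : ℕ) (g : MvPolynomial (Fin n) ℂ) (μ : Fin n → ℕ) : Prop :=
  ∃ (S : Finset (Fin n → ℕ)) (coef : (Fin n → ℕ) → ℂ),
    μ ∈ S ∧ coef μ ≠ 0 ∧
    (∀ ν ∈ S, Antitone ν ∧ (ν = μ ∨ DomLT n ν μ)) ∧
    g = ∑ ν ∈ S, coef ν • msym n ν

/-! Put `m = k + 1` and `N = r - 1`, and let `V = ∏_{i < j} (x_j ^ N - x_i ^ N)` over the last `m`
variables, which carry the `m` smallest parts of `μ`. Multiplying `x ^ μ` by the diagonal term of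
`V` adds `0, N, 2N, …, (m - 1)N` to these parts. Slimness makes the resulting exponents
strictly increasing and less than `mN`. By the rearrangement inequality, combined with the fact
that `∑ ν_i ^ 2 ≤ ∑ μ_i ^ 2` whenever `ν ≤ μ` in the dominance order, no other term of `V * g`
contributes to this monomial, so its coefficient in `V * g` is `c_μ ≠ 0`. Since the `mN` points
`c * t ^ a * q ^ b` are distinct, the combinatorial Nullstellensatz yields a point with wheel
coordinates among these where `V * g ≠ 0`. There `V ≠ 0` forces the exponents `a` to be a
permutation of `0, …, k`, which the symmetry of `g` undoes. -/

section Dominance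

variable {R : Type*} [CommRing R] {n : ℕ}

theorem sum_mul_nonneg_of_antitone [PartialOrder R] [IsOrderedRing R] {w d : Fin n → R}
    (hw : Antitone w) (hw0 : ∀ i, 0 ≤ w i) (hd : ∀ i, 0 ≤ ∑ j ∈ Finset.Iic i, d j) :
    0 ≤ ∑ i, w i * d i := by
  induction n with
  | zero => simp
  | succ n ih =>
    have split_last : ∑ i, w i * d i =
        ∑ i : Fin n, (w i.castSucc - w (Fin.last n)) * d i.castSucc +
          w (Fin.last n) * ∑ j, d j := by
      simp only [Fin.sum_univ_castSucc, sub_mul, Finset.sum_sub_distrib, ← Finset.mul_sum]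
      ring
    have head_nonneg : 0 ≤ ∑ i : Fin n, (w i.castSucc - w (Fin.last n)) * d i.castSucc :=
      ih (w := fun i ↦ w i.castSucc - w (Fin.last n)) (d := fun i ↦ d i.castSucc)
        (fun i j hij ↦ sub_le_sub_right (hw (Fin.castSucc_le_castSucc_iff.2 hij)) _)
        (fun i ↦ sub_nonneg.2 (hw (Fin.le_last _)))
        (fun i ↦ by simpa only [Fin.sum_Iic_castSucc] using hd i.castSucc)
    have total_nonneg : 0 ≤ ∑ j, d j := by
      simpa only [← Fin.top_eq_last, Finset.Iic_top] using hd (Fin.last n)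
    rw [split_last]
    exact add_nonneg head_nonneg (mul_nonneg (hw0 _) total_nonneg)

theorem sum_sq_le_sum_sq_of_antitone [LinearOrder R] [IsStrictOrderedRing R] {a b : Fin n → R}
    (ha : Antitone a) (ha0 : ∀ i, 0 ≤ a i)
    (hab : ∀ i, ∑ j ∈ Finset.Iic i, a j ≤ ∑ j ∈ Finset.Iic i, b j) :
    ∑ i, a i ^ 2 ≤ ∑ i, b i ^ 2 := by
  have cross_nonneg : 0 ≤ ∑ i, a i * (b i - a i) :=
    sum_mul_nonneg_of_antitone ha ha0 fun i ↦ by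
      rw [Finset.sum_sub_distrib]
      exact sub_nonneg.2 (hab i)
  have sq_diff_nonneg : 0 ≤ ∑ i, (b i - a i) ^ 2 := Finset.sum_nonneg fun i _ ↦ sq_nonneg _
  have expand : ∑ i, b i ^ 2 =
      ∑ i, a i ^ 2 + 2 * ∑ i, a i * (b i - a i) + ∑ i, (b i - a i) ^ 2 := by
    rw [Finset.mul_sum, ← Finset.sum_add_distrib, ← Finset.sum_add_distrib]
    exact Finset.sum_congr rfl fun i _ ↦ by ring
  linarith

theorem DomLT.sum_sq_le {ν μ : Fin n → ℕ} (hν : Antitone ν) (h : DomLT n ν μ) :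
    ∑ i, ν i ^ 2 ≤ ∑ i, μ i ^ 2 := by
  have key : ∑ i, (ν i : ℤ) ^ 2 ≤ ∑ i, (μ i : ℤ) ^ 2 :=
    sum_sq_le_sum_sq_of_antitone (fun i j hij ↦ mod_cast hν hij) (fun i ↦ by positivity)
      fun i ↦ by
        rw [← Finset.filter_ge_eq_Iic]
        exact_mod_cast h.2.2 i
  exact_mod_cast key

end Dominance

section MonomialSymmetric

variable {n : ℕ}

theorem eq_of_antitone_of_comp_perm_eq {α : Type*} [PartialOrder α] {a b : Fin n → α}
    (ha : Antitone a) (hb : Antitone b) (w : Equiv.Perm (Fin n)) (h : a ∘ w = b) : a = b := by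
  subst h
  exact OrderDual.toDual.injective.comp_left
    (Tuple.unique_monotone (f := OrderDual.toDual ∘ a) (σ := 1) (τ := w) ha hb)

open Classical in
theorem coeff_msym (l : Fin n → ℕ) (e : Fin n →₀ ℕ) :
    coeff e (msym n l) = if ∃ w : Equiv.Perm (Fin n), l ∘ w = e then 1 else 0 := by
  simp only [msym, coeff_sum, coeff_monomial, Equiv.symm_apply_eq, Finset.sum_ite_eq',
    Finset.mem_image, Finset.mem_univ, true_and]
  rfl

theorem msym_isSymmetric (l : Fin n → ℕ) : (msym n l).IsSymmetric := by
  intro σ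
  ext e
  obtain ⟨e, rfl⟩ := (Finsupp.domCongr (M := ℕ) σ).surjective e
  have mapDomain_eq : Finsupp.domCongr σ e = e.mapDomain σ :=
    Finsupp.equivMapDomain_eq_mapDomain σ e
  have coe_mapDomain : ⇑(e.mapDomain σ) = e ∘ σ.symm :=
    funext fun _ ↦ Finsupp.mapDomain_equiv_apply _ _
  have same_orbit : (∃ w : Equiv.Perm (Fin n), l ∘ w = e) ↔
      ∃ w : Equiv.Perm (Fin n), l ∘ w = e ∘ σ.symm :=
    (Equiv.mulRight σ⁻¹).exists_congr fun w ↦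
      (σ.symm.surjective.injective_comp_right.eq_iff (a := l ∘ w)).symm
  simp only [mapDomain_eq, coeff_rename_mapDomain _ σ.injective, coeff_msym, coe_mapDomain,
    same_orbit]

end MonomialSymmetric

namespace HighestPartition

variable {n : ℕ} {g : MvPolynomial (Fin n) ℂ} {μ : Fin n → ℕ}

theorem isSymmetric (hg : HighestPartition n g μ) : g.IsSymmetric := by
  obtain ⟨S, coef, -, -, -, rfl⟩ := hg
  exact (symmetricSubalgebra (Fin n) ℂ).sum_mem fun ν _ ↦
    Subalgebra.smul_mem _ (msym_isSymmetric ν) _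

theorem exists_perm_of_coeff_ne_zero (hg : HighestPartition n g μ) {e : Fin n →₀ ℕ}
    (he : coeff e g ≠ 0) : ∃ (ν : Fin n → ℕ) (w : Equiv.Perm (Fin n)),
      Antitone ν ∧ (ν = μ ∨ DomLT n ν μ) ∧ ν ∘ w = e := by
  obtain ⟨S, coef, -, -, hS, rfl⟩ := hg
  simp only [coeff_sum, coeff_smul] at he
  obtain ⟨ν, hν, hνe⟩ := Finset.exists_ne_zero_of_sum_ne_zero he
  obtain ⟨w, hw⟩ : ∃ w : Equiv.Perm (Fin n), ν ∘ w = e := by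
    by_contra hno
    simp [coeff_msym, hno] at hνe
  exact ⟨ν, w, (hS ν hν).1, (hS ν hν).2, hw⟩

theorem coeff_ne_zero (hg : HighestPartition n g μ) :
    coeff (Finsupp.equivFunOnFinite.symm μ) g ≠ 0 := by
  obtain ⟨S, coef, hμ, hcoef, hS, rfl⟩ := hg
  rw [coeff_sum, Finset.sum_eq_single_of_mem μ hμ]
  · have in_orbit : ∃ w : Equiv.Perm (Fin n), μ ∘ w = μ := ⟨1, rfl⟩
    simpa [coeff_msym, in_orbit] using hcoef
  · intro ν hν hne
    have not_in_orbit : ¬ ∃ w : Equiv.Perm (Fin n), ν ∘ w = μ := fun ⟨w, hw⟩ ↦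
      hne (eq_of_antitone_of_comp_perm_eq (hS ν hν).1 (hS μ hμ).1 w hw)
    simp [coeff_msym, not_in_orbit]

theorem isHomogeneous (hg : HighestPartition n g μ) : g.IsHomogeneous (∑ i, μ i) := by
  intro e he
  obtain ⟨ν, w, -, hνμ, hw⟩ := hg.exists_perm_of_coeff_ne_zero he
  rw [show Finsupp.weight 1 e = ∑ i, e i from
    (DFunLike.congr_fun Finsupp.degree_eq_weight_one e).symm.trans (Finsupp.degree_eq_sum e), ← hw]
  calc ∑ i, (ν ∘ w) i = ∑ i, ν i := Equiv.sum_comp w ν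
    _ = ∑ i, μ i := hνμ.elim (fun h ↦ by rw [h]) fun hdom ↦ hdom.2.1

theorem sum_sq_le_of_coeff_ne_zero (hg : HighestPartition n g μ) {e : Fin n →₀ ℕ}
    (he : coeff e g ≠ 0) : ∑ i, e i ^ 2 ≤ ∑ i, μ i ^ 2 := by
  obtain ⟨ν, w, hν, hνμ, hw⟩ := hg.exists_perm_of_coeff_ne_zero he
  calc ∑ i, e i ^ 2 = ∑ i, ν i ^ 2 := by
        rw [← hw]
        exact Equiv.sum_comp w fun i ↦ ν i ^ 2
    _ ≤ ∑ i, μ i ^ 2 := by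
        rcases hνμ with rfl | hdom
        · rfl
        · exact hdom.sum_sq_le hν

end HighestPartition

section Staircase

variable {τ : Type*} {m : ℕ} (ι : Fin m ↪ τ) (N : ℕ) (σ : Equiv.Perm (Fin m))

/-- The exponent of the monomial `∏ i, x_{ι i} ^ (N * σ i)`, which is the term indexed by `σ` in the
expansion of the Vandermonde determinant in the variables `x_{ι i} ^ N`. -/
noncomputable def staircase : τ →₀ ℕ := ∑ i, Finsupp.single (ι i) (N * σ i)

theorem staircase_apply_embedding (i : Fin m) : staircase ι N σ (ι i) = N * σ i := by
  classical
  simp [staircase, Finsupp.finsetSum_apply, Finsupp.single_apply]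

theorem degree_staircase : (staircase ι N σ).degree = ∑ i : Fin m, N * (i : ℕ) := by
  simp only [staircase, map_sum, Finsupp.degree_single]
  exact Equiv.sum_comp σ fun i ↦ N * (i : ℕ)

variable [Fintype τ]

theorem sum_mul_staircase (f : τ → ℕ) :
    ∑ j, f j * staircase ι N σ j = ∑ i, f (ι i) * (N * σ i) := by
  classical
  simp only [staircase, Finsupp.finsetSum_apply, Finset.mul_sum]
  rw [Finset.sum_comm]
  simp [Finsupp.single_apply]

theorem sum_staircase_sq : ∑ j, staircase ι N σ j ^ 2 = ∑ i : Fin m, (N * (i : ℕ)) ^ 2 := by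
  simp only [sq, sum_mul_staircase, staircase_apply_embedding]
  exact Equiv.sum_comp σ fun i ↦ N * (i : ℕ) * (N * i)

variable {ι N σ}

theorem perm_eq_one_of_sum_mul_le {a : Fin m → ℕ} (ha : StrictMono a)
    (h : ∑ i : Fin m, a i * (i : ℕ) ≤ ∑ i, a i * (σ i : ℕ)) : σ = 1 := by
  have monovary_val : Monovary a (fun i : Fin m ↦ (i : ℕ)) :=
    ha.monotone.monovary Fin.val_strictMono.monotone
  have monovary_perm : Monovary a (fun i ↦ (σ i : ℕ)) :=
    monovary_val.sum_mul_comp_perm_eq_sum_mul_iff.1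
      (monovary_val.sum_mul_comp_perm_le_sum_mul.antisymm h)
  refine (Equiv.Perm.monotone_iff σ).1 fun i j hij ↦ ?_
  by_contra! hlt
  exact (monovary_perm hlt).not_gt (ha (hij.lt_of_ne fun h ↦ by simp [h] at hlt))

theorem perm_eq_one_of_add_staircase_eq {e e₀ : τ →₀ ℕ} (hN : 0 < N)
    (hmono : StrictMono fun i : Fin m ↦ e₀ (ι i) + N * i)
    (hsq : ∑ j, e j ^ 2 ≤ ∑ j, e₀ j ^ 2)
    (h : staircase ι N σ + e = staircase ι N 1 + e₀) : σ = 1 := by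
  set p : τ →₀ ℕ := staircase ι N 1 + e₀ with hp
  have sum_sq (ρ : Equiv.Perm (Fin m)) (f : τ →₀ ℕ) (hf : staircase ι N ρ + f = p) :
      ∑ j, f j ^ 2 + 2 * ∑ i, p (ι i) * (N * ρ i) =
        ∑ j, p j ^ 2 + ∑ i : Fin m, (N * (i : ℕ)) ^ 2 := by
    rw [← sum_mul_staircase, ← sum_staircase_sq ι N ρ, Finset.mul_sum, ← Finset.sum_add_distrib,
      ← Finset.sum_add_distrib]
    refine Finset.sum_congr rfl fun j _ ↦ ?_
    rw [← hf, Finsupp.add_apply]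
    ring
  have pairing_le : N * ∑ i : Fin m, p (ι i) * (i : ℕ) ≤ N * ∑ i, p (ι i) * (σ i : ℕ) := by
    have h₁ := sum_sq 1 e₀ rfl
    have hσ := sum_sq σ e h
    simp only [mul_left_comm _ N, ← Finset.mul_sum, Equiv.Perm.coe_one, id_eq] at h₁ hσ
    linarith
  refine perm_eq_one_of_sum_mul_le (a := fun i ↦ p (ι i)) ?_ (le_of_mul_le_mul_left pairing_le hN)
  simpa [hp, staircase_apply_embedding, add_comm] using hmono

end Staircase

section PowVandermonde

variable {τ R : Type*} [CommRing R] {m : ℕ} (ι : Fin m ↪ τ) (N : ℕ)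

variable (R) in
/-- The Vandermonde determinant `∏_{i < j} (x_{ι j} ^ N - x_{ι i} ^ N)`, which detects whether the
`N`-th powers of the coordinates selected by `ι` are distinct. -/
noncomputable def powVandermonde : MvPolynomial τ R :=
  (Matrix.vandermonde fun i ↦ X (ι i) ^ N).det

theorem powVandermonde_eq_sum_monomial :
    powVandermonde R ι N =
      ∑ σ : Equiv.Perm (Fin m), monomial (staircase ι N σ) ((Equiv.Perm.sign σ : ℤ) : R) := by
  rw [powVandermonde, ← Matrix.det_transpose, Matrix.det_apply']
  refine Finset.sum_congr rfl fun σ _ ↦ ?_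
  simp only [Matrix.transpose_apply, Matrix.vandermonde_apply, ← pow_mul]
  rw [staircase, ← mul_one ((Equiv.Perm.sign σ : ℤ) : R), ← C_mul_monomial, monomial_sum_one,
    map_intCast]
  simp only [X_pow_eq_monomial]

theorem powVandermonde_isHomogeneous :
    (powVandermonde R ι N).IsHomogeneous (∑ i : Fin m, N * (i : ℕ)) := by
  rw [powVandermonde_eq_sum_monomial]
  exact IsHomogeneous.sum _ _ _ fun σ _ ↦ isHomogeneous_monomial _ (degree_staircase ι N σ)

theorem injective_pow_of_eval_powVandermonde_ne_zero [IsDomain R] {x : τ → R}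
    (hx : eval x (powVandermonde R ι N) ≠ 0) : Function.Injective fun i ↦ x (ι i) ^ N := by
  rw [← Matrix.det_vandermonde_ne_zero_iff]
  convert hx
  rw [powVandermonde, RingHom.map_det]
  congr 1
  ext i j
  simp [Matrix.vandermonde_apply]

variable {ι N} [Fintype τ] {g : MvPolynomial τ R} {e₀ : τ →₀ ℕ}

theorem coeff_powVandermonde_mul (hN : 0 < N)
    (hmono : StrictMono fun i : Fin m ↦ e₀ (ι i) + N * i)
    (hsq : ∀ e, coeff e g ≠ 0 → ∑ j, e j ^ 2 ≤ ∑ j, e₀ j ^ 2) :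
    coeff (staircase ι N 1 + e₀) (powVandermonde R ι N * g) = coeff e₀ g := by
  rw [powVandermonde_eq_sum_monomial, Finset.sum_mul, coeff_sum,
    Finset.sum_eq_single_of_mem 1 (Finset.mem_univ _), coeff_monomial_mul]
  · simp
  · intro σ _ hσ
    rw [coeff_monomial_mul']
    split_ifs with hle
    · by_contra hne
      exact hσ (perm_eq_one_of_add_staircase_eq hN hmono (hsq _ (right_ne_zero_of_mul hne))
        (add_tsub_cancel_of_le hle))
    · rfl

theorem exists_injective_pow_and_eval_ne_zero [IsDomain R] [Infinite R] {D : ℕ} (hN : 0 < N)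
    (hmono : StrictMono fun i : Fin m ↦ e₀ (ι i) + N * i)
    (hg : g.IsHomogeneous D) (hcoeff : coeff e₀ g ≠ 0)
    (hsq : ∀ e, coeff e g ≠ 0 → ∑ j, e j ^ 2 ≤ ∑ j, e₀ j ^ 2)
    (A : Finset R) (hA : ∀ i : Fin m, e₀ (ι i) + N * i < A.card) :
    ∃ x : τ → R, (∀ i, x (ι i) ∈ A) ∧ (Function.Injective fun i ↦ x (ι i) ^ N) ∧
      eval x g ≠ 0 := by
  classical
  set p : τ →₀ ℕ := staircase ι N 1 + e₀ with hp
  have coeff_ne_zero : coeff p (powVandermonde R ι N * g) ≠ 0 := by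
    rwa [coeff_powVandermonde_mul hN hmono hsq]
  have homogeneous := (powVandermonde_isHomogeneous (R := R) ι N).mul hg
  have totalDegree_eq : (powVandermonde R ι N * g).totalDegree = p.degree := by
    rw [homogeneous.totalDegree (ne_zero_iff.2 ⟨p, coeff_ne_zero⟩)]
    exact (not_imp_comm.1 homogeneous.coeff_eq_zero coeff_ne_zero).symm
  choose B hB using fun j ↦ Infinite.exists_subset_card_eq R (p j + 1)
  obtain ⟨x, hxS, hx⟩ := combinatorial_nullstellensatz_exists_eval_nonzero
    (powVandermonde R ι N * g) p coeff_ne_zero totalDegree_eq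
    (fun j ↦ if j ∈ Set.range ι then A else B j) (fun j ↦ by
      split_ifs with hj
      · obtain ⟨i, rfl⟩ := hj
        simpa [hp, staircase_apply_embedding, add_comm] using hA i
      · simp [hB j])
  rw [map_mul] at hx
  exact ⟨x, fun i ↦ by simpa using hxS (ι i),
    injective_pow_of_eval_powVandermonde_ne_zero ι N (left_ne_zero_of_mul hx),
    right_ne_zero_of_mul hx⟩

end PowVandermonde

theorem exists_comp_eq_and_eval_eq_of_isSymmetric {α τ R : Type*} [CommSemiring R] [Finite α]
    {g : MvPolynomial τ R} (hg : g.IsSymmetric) (x : τ → R) {u v : α → τ}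
    (hu : Function.Injective u) (hv : Function.Injective v) :
    ∃ y : τ → R, y ∘ u = x ∘ v ∧ eval y g = eval x g := by
  obtain ⟨ρ, hρ⟩ := Equiv.Perm.exists_extending_pair u v hu hv
  refine ⟨x ∘ ρ, funext fun i ↦ congrArg x (hρ i), ?_⟩
  rw [← eval_rename, hg ρ]

section WheelGrid

variable {R : Type*} [CommRing R] {t q c : R} {m N : ℕ}

variable (t q c m N) in
open Classical in
/-- The points `c * t ^ a * q ^ b` with `a < m` and `b < N`, the possible values of the coordinates
in the wheel condition. -/
noncomputable def wheelGrid : Finset R :=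
  (Finset.range m ×ˢ Finset.range N).image fun p ↦ c * t ^ p.1 * q ^ p.2

theorem mem_wheelGrid {x : R} :
    x ∈ wheelGrid t q c m N ↔ ∃ a < m, ∃ b < N, c * t ^ a * q ^ b = x := by
  simp [wheelGrid, and_assoc]

theorem card_wheelGrid [IsDomain R] (hcop : m.Coprime N) (ht : IsPrimitiveRoot t m)
    (hq : IsPrimitiveRoot q N) (hc : c ≠ 0) : (wheelGrid t q c m N).card = m * N := by
  classical
  have injOn : Set.InjOn (fun p : ℕ × ℕ ↦ c * t ^ p.1 * q ^ p.2)
      (Finset.range m ×ˢ Finset.range N : Finset (ℕ × ℕ)) := by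
    rintro ⟨a, b⟩ hab ⟨a', b'⟩ hab' h
    simp only [Finset.coe_product, Finset.coe_range, Set.mem_prod, Set.mem_Iio] at hab hab'
    simp only [mul_assoc, mul_right_inj' hc] at h
    have pow_N_eq : (t ^ N) ^ a = (t ^ N) ^ a' := by
      simpa [mul_pow, pow_right_comm _ _ N, hq.pow_eq_one] using congrArg (· ^ N) h
    obtain rfl : a = a' := (ht.pow_of_coprime N hcop.symm).pow_inj hab.1 hab'.1 pow_N_eq
    have ht0 : t ≠ 0 := ht.ne_zero (by omega)
    obtain rfl : b = b' := hq.pow_inj hab.2 hab'.2 (mul_left_cancel₀ (pow_ne_zero a ht0) h)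
    rfl
  rw [wheelGrid, Finset.card_image_of_injOn injOn, Finset.card_product, Finset.card_range,
    Finset.card_range]

theorem exists_perm_of_mem_wheelGrid (hN : 0 < N) (hq : q ^ N = 1) {x : Fin m → R}
    (hx : ∀ i, x i ∈ wheelGrid t q c m N) (hinj : Function.Injective fun i ↦ x i ^ N) :
    ∃ (σ : Equiv.Perm (Fin m)) (s : ℕ → ℕ), (∀ j, s j < N) ∧
      ∀ i, x (σ i) = c * t ^ (i : ℕ) * q ^ s i := by
  choose a ha b hb hab using fun i ↦ mem_wheelGrid.1 (hx i)
  have pow_N_eq (i : Fin m) : x i ^ N = c ^ N * (t ^ a i) ^ N := by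
    rw [← hab i, mul_pow, mul_pow, pow_right_comm q, hq, one_pow, mul_one]
  have index_injective : Function.Injective fun i ↦ (⟨a i, ha i⟩ : Fin m) := fun i j hij ↦
    hinj (by simp only [pow_N_eq, Fin.mk.inj hij])
  let ρ : Equiv.Perm (Fin m) :=
    Equiv.ofBijective _ (Finite.injective_iff_bijective.1 index_injective)
  have a_symm (i : Fin m) : a (ρ.symm i) = i := congrArg Fin.val (ρ.apply_symm_apply i)
  refine ⟨ρ.symm, fun j ↦ if hj : j < m then b (ρ.symm ⟨j, hj⟩) else 0, fun j ↦ ?_, fun i ↦ ?_⟩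
  · dsimp only
    split_ifs with hj
    exacts [hb _, hN]
  · simp [← hab, a_symm]

end WheelGrid

section Slim

variable {r d m : ℕ} {μ : Fin (d + m) → ℕ}

theorem IsSlim.strictMono_add_mul (h : IsSlim r (d + m) μ) :
    StrictMono fun i : Fin m ↦ μ (Fin.natAdd d i) + (r - 1) * i := by
  cases m with
  | zero => exact fun i ↦ i.elim0
  | succ m =>
    refine Fin.strictMono_iff_lt_succ.2 fun i ↦ ?_
    have gap := h.1 (Fin.natAdd d i.castSucc) (by simp; omega)
    have next : (⟨(Fin.natAdd d i.castSucc : ℕ) + 1, by simp; omega⟩ : Fin (d + (m + 1))) =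
        Fin.natAdd d i.succ := Fin.ext (by simp [add_assoc])
    rw [next] at gap
    simp only [Fin.val_castSucc, Fin.val_succ, mul_add_one]
    omega

theorem IsSlim.add_mul_lt (h : IsSlim r (d + m) μ) (i : Fin m) :
    μ (Fin.natAdd d i) + (r - 1) * i < m * (r - 1) := by
  cases m with
  | zero => exact i.elim0
  | succ m =>
    calc μ (Fin.natAdd d i) + (r - 1) * i
        ≤ μ (Fin.natAdd d (Fin.last m)) + (r - 1) * (Fin.last m : ℕ) :=
          h.strictMono_add_mul.monotone (Fin.le_last i)
      _ < (r - 1) + (r - 1) * m := Nat.add_lt_add_right (h.2 _ (by simp)) _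
      _ = (m + 1) * (r - 1) := by ring

end Slim

/-- if `μ ∈ π_n` is `(r-1)`-slim, `g` is symmetric with highest partition `μ`
and `n > k`, then for any `c ≠ 0` there are `s_1,…,s_{k+1} ∈ {0,…,r-2}` such that
`g(c q^{s_1}, c t q^{s_2}, …, c t^k q^{s_{k+1}}, x_{k+2}, …, x_n)` is not identically zero
in the remaining variables. -/
theorem wheel_condition_broken_for_slim_highest_partition
    (k r n : ℕ) (hk : 0 < k) (hr : 2 ≤ r) (hcop : Nat.Coprime (k + 1) (r - 1))
    (t q : ℂ) (ht : IsPrimitiveRoot t (k + 1)) (hq : IsPrimitiveRoot q (r - 1))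
    (hn : k < n)
    (μ : Fin n → ℕ) (hμa : Antitone μ) (hμs : IsSlim r n μ)
    (g : MvPolynomial (Fin n) ℂ) (hg : HighestPartition n g μ)
    (c : ℂ) (hc : c ≠ 0) :
    ∃ s : ℕ → ℕ, (∀ i, s i ≤ r - 2) ∧ ∃ y : Fin n → ℂ,
      MvPolynomial.eval
        (fun j : Fin n =>
          if (j : ℕ) ≤ k then c * t ^ (j : ℕ) * q ^ (s (j : ℕ)) else y j) g ≠ 0 := by
  obtain ⟨d, rfl⟩ := Nat.exists_eq_add_of_le' (Nat.succ_le_of_lt hn)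
  have hN : 0 < r - 1 := by omega
  obtain ⟨x, hx_mem, hx_inj, hx⟩ :=
    exists_injective_pow_and_eval_ne_zero (ι := Fin.natAddEmb d) hN hμs.strictMono_add_mul
      hg.isHomogeneous hg.coeff_ne_zero (fun _ he ↦ hg.sum_sq_le_of_coeff_ne_zero he)
      (wheelGrid t q c (k + 1) (r - 1))
      fun i ↦ (hμs.add_mul_lt i).trans_eq (card_wheelGrid hcop ht hq hc).symm
  obtain ⟨σ, s, hs, hσ⟩ := exists_perm_of_mem_wheelGrid hN hq.pow_eq_one hx_mem hx_inj
  obtain ⟨y, hy, hyx⟩ := exists_comp_eq_and_eval_eq_of_isSymmetric hg.isSymmetric x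
    (Fin.castLE_injective hn) ((Fin.natAdd_injective _ d).comp σ.injective)
  refine ⟨s, fun i ↦ by have := hs i; omega, y, ?_⟩
  have wheel_eq (j : Fin (d + (k + 1))) (hj : (j : ℕ) ≤ k) : c * t ^ (j : ℕ) * q ^ s j = y j :=
    (hσ ⟨j, Nat.lt_succ_of_le hj⟩).symm.trans (congrFun hy ⟨j, Nat.lt_succ_of_le hj⟩).symm
  simpa +contextual only [wheel_eq, ite_self, hyx] using hx
end

section
/- Let f ∈ F_n^{(k,r)} be a symmetric polynomial satisfying the wheel condition, let ρ ∈ {0,1,…,n} and t̃ ∈ ℂ. Then the symmetric polynomial D_n^ρ(q, t̃) f again satisfies the wheel condition, i.e., D_n^ρ(q, t̃) f ∈ F_n^{(k,r)}. Equivalently, the polynomial h = Σ_{|I|=ρ} t̃^{ρ(ρ−1)/2} ∏_{i∈I, j∉I} (t̃ x_i − x_j) · ∏_{(i,j), i≠j, not (i∈I and j∉I)} (x_i − x_j) · (T_I f), which equals ∏_{i≠j}(x_i − x_j) · D_n^ρ(q,t̃) f, vanishes identically on every plane x_i = t^{i−1} q^{s_i} x_1 (2 ≤ i ≤ k+1),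 s_2,…,s_{k+1} ∈ {0,…,r−2}. -/
open MvPolynomial

/-!
The wheel planes are permuted when some of the coordinates are multiplied by `q`: the exponents
`s_i` only matter modulo `r - 1`, because `q ^ (r - 1) = 1`, so multiplying `x_i` by `q` replaces
`s_i` by `s_i + 1`, while multiplying `x_1` by `q` replaces every `s_i` by `s_i - 1`. Hence every
`T_I f` already vanishes on all the wheel planes, and `D_n^ρ f` is a combination of the `T_I f`.
-/

section ShiftVars

variable {σ R : Type*} [DecidableEq σ] [CommSemiring R]

/-- The shift operator `T_I`, substituting `q * x_i` for `x_i` for every `i ∈ I`. -/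
noncomputable def shiftVars (q : R) (I : Finset σ) : MvPolynomial σ R →ₐ[R] MvPolynomial σ R :=
  aeval fun i => if i ∈ I then C q * X i else X i

theorem eval_shiftVars (q : R) (I : Finset σ) (z : σ → R) (f : MvPolynomial σ R) :
    eval z (shiftVars q I f) = eval (fun i => if i ∈ I then q * z i else z i) f := by
  have eval_comp_algebraMap : (eval z).comp (algebraMap R (MvPolynomial σ R)) = RingHom.id R := by
    ext a
    simp
  simp only [shiftVars, map_aeval, eval_comp_algebraMap, apply_ite (eval z), map_mul, eval_C,
    eval_X]
  rfl

end ShiftVars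

section ClearedMacdonald

variable {σ R : Type*} [Fintype σ] [DecidableEq σ] [CommRing R]

/-- The polynomial `∏_{i ≠ j} (x_i - x_j) · D_n^ρ(q, t') f`, that is, the image of `f` under the
Macdonald operator with denominators cleared. A pair `p = (i, j)` with `i ∈ I` and `j ∉ I`
contributes the numerator of the operator, any other pair with `i ≠ j` the factor `x_i - x_j`. -/
noncomputable def clearedMacdonald (q t' : R) (ρ : ℕ) (f : MvPolynomial σ R) : MvPolynomial σ R :=
  ∑ I ∈ Finset.powersetCard ρ (Finset.univ : Finset σ),
    t' ^ (ρ * (ρ - 1) / 2) •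
      ((∏ p : σ × σ with p.1 ∈ I ∧ p.2 ∉ I, (C t' * X p.1 - X p.2)) *
        (∏ p : σ × σ with p.1 ≠ p.2 ∧ ¬(p.1 ∈ I ∧ p.2 ∉ I), (X p.1 - X p.2)) *
        shiftVars q I f)

theorem clearedMacdonald_mem {J : Ideal (MvPolynomial σ R)} {f : MvPolynomial σ R} {q : R}
    (hf : ∀ I : Finset σ, shiftVars q I f ∈ J) (t' : R) (ρ : ℕ) :
    clearedMacdonald q t' ρ f ∈ J :=
  J.sum_mem fun I _ => J.smul_of_tower_mem _ (J.mul_mem_left _ (hf I))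

end ClearedMacdonald

section WheelPoint

variable {R : Type*} {n : ℕ}

/-- The point of the wheel plane with exponents `s` whose first coordinate is `x` and whose free
coordinates are given by `y`. Coordinates are numbered from `0`, so coordinate `j` is `x_{j+1}` in
the usual notation; `s` is read only at `1, …, k` and `y` only beyond `k`. -/
def wheelPoint [Monoid R] (k : ℕ) (t q : R) (s : ℕ → ℕ) (x : R) (y : Fin n → R) : Fin n → R :=
  fun j => if (j : ℕ) = 0 then x
    else if (j : ℕ) ≤ k then t ^ (j : ℕ) * q ^ s j * x else y j

/-- The union of the wheel planes in affine `n`-space, over all exponents `0 ≤ s_i ≤ r - 2`. -/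
def wheelPlanes [Monoid R] (k r n : ℕ) (t q : R) : Set (Fin n → R) :=
  {z | ∃ s : ℕ → ℕ, (∀ i, s i ≤ r - 2) ∧ ∃ x y, wheelPoint k t q s x y = z}

theorem wheelPoint_mem_wheelPlanes [Monoid R] {r : ℕ} {q : R} (hr : 2 ≤ r) (hq : q ^ (r - 1) = 1)
    (k : ℕ) (t : R) (s : ℕ → ℕ) (x : R) (y : Fin n → R) :
    wheelPoint k t q s x y ∈ wheelPlanes k r n t q := by
  refine ⟨fun i => s i % (r - 1), fun i => ?_, x, y, ?_⟩
  · have := Nat.mod_lt (s i) (show 0 < r - 1 by lia)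
    lia
  · funext j
    simp only [wheelPoint, ← pow_eq_pow_mod _ hq]

-- `(r - 2) * e 0` stands for `-e 0` modulo `r - 1`.
theorem pow_mul_wheelPoint [CommMonoid R] {r : ℕ} {q : R} (hr : 2 ≤ r) (hq : q ^ (r - 1) = 1)
    (e : ℕ → ℕ) (k : ℕ) (t : R) (s : ℕ → ℕ) (x : R) (y : Fin n → R) :
    (fun j : Fin n => q ^ e j * wheelPoint k t q s x y j) =
      wheelPoint k t q (fun j => s j + e j + (r - 2) * e 0) (q ^ e 0 * x)
        (fun j => q ^ e j * y j) := by
  have pow_cancel : q ^ ((r - 2) * e 0) * q ^ e 0 = 1 := by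
    rw [← pow_add, ← Nat.succ_mul, show (r - 2).succ = r - 1 by lia, pow_mul, hq, one_pow]
  funext j
  simp only [wheelPoint]
  split_ifs with is_zero is_wheel
  · rw [is_zero]
  · calc q ^ e j * (t ^ (j : ℕ) * q ^ s j * x)
        = t ^ (j : ℕ) * (q ^ s j * q ^ e j) * x := by ac_rfl
      _ = t ^ (j : ℕ) * (q ^ s j * q ^ e j) * (q ^ ((r - 2) * e 0) * q ^ e 0) * x := by
          rw [pow_cancel, mul_one]
      _ = t ^ (j : ℕ) * q ^ (s j + e j + (r - 2) * e 0) * (q ^ e 0 * x) := by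
          simp only [pow_add, mul_assoc]
  · rfl

theorem shift_mem_wheelPlanes [CommMonoid R] {k r : ℕ} {t q : R} (hr : 2 ≤ r)
    (hq : q ^ (r - 1) = 1) {z : Fin n → R} (hz : z ∈ wheelPlanes k r n t q) (I : Finset (Fin n)) :
    (fun i => if i ∈ I then q * z i else z i) ∈ wheelPlanes k r n t q := by
  obtain ⟨s, -, x, y, rfl⟩ := hz
  let e : ℕ → ℕ := fun j => if j ∈ I.map Fin.valEmbedding then 1 else 0
  have e_val (i : Fin n) : e i = if i ∈ I then 1 else 0 :=
    if_congr (Finset.mem_map' Fin.valEmbedding) rfl rfl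
  have shift_eq : (fun i => if i ∈ I then q * wheelPoint k t q s x y i
      else wheelPoint k t q s x y i) = fun i : Fin n => q ^ e i * wheelPoint k t q s x y i := by
    funext i
    rw [e_val]
    split_ifs <;> simp
  rw [shift_eq, pow_mul_wheelPoint hr hq]
  exact wheelPoint_mem_wheelPlanes hr hq ..

end WheelPoint

section WheelIdeal

variable {R : Type*} [CommSemiring R] {k r n : ℕ} {t q : R} {f : MvPolynomial (Fin n) R}

/-- The ideal of polynomials satisfying the wheel condition, that is, vanishing on all wheel
planes; `F_n^{(k,r)}` consists of its symmetric elements. -/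
noncomputable def wheelIdeal (k r n : ℕ) (t q : R) : Ideal (MvPolynomial (Fin n) R) :=
  ⨅ z ∈ wheelPlanes k r n t q, RingHom.ker (eval z)

theorem mem_wheelIdeal : f ∈ wheelIdeal k r n t q ↔ ∀ z ∈ wheelPlanes k r n t q, eval z f = 0 := by
  simp only [wheelIdeal, Submodule.mem_iInf, RingHom.mem_ker]

theorem mem_wheelIdeal_iff_eval_wheelPoint :
    f ∈ wheelIdeal k r n t q ↔ ∀ s : ℕ → ℕ, (∀ i, s i ≤ r - 2) → ∀ x y,
      eval (wheelPoint k t q s x y) f = 0 := by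
  rw [mem_wheelIdeal]
  constructor
  · exact fun h s hs x y => h _ ⟨s, hs, x, y, rfl⟩
  · rintro h _ ⟨s, hs, x, y, rfl⟩
    exact h s hs x y

theorem shiftVars_mem_wheelIdeal (hr : 2 ≤ r) (hq : q ^ (r - 1) = 1)
    (hf : f ∈ wheelIdeal k r n t q) (I : Finset (Fin n)) :
    shiftVars q I f ∈ wheelIdeal k r n t q := by
  rw [mem_wheelIdeal] at hf ⊢
  intro z hz
  rw [eval_shiftVars]
  exact hf _ (shift_mem_wheelPlanes hr hq hz I)

end WheelIdeal

theorem macdonald_operator_preserves_wheel_condition_general {R : Type*} [CommRing R]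
    {k r n : ℕ} {t q : R} {f : MvPolynomial (Fin n) R} (hr : 2 ≤ r) (hq : q ^ (r - 1) = 1)
    (hf : f ∈ wheelIdeal k r n t q) (ρ : ℕ) (t' : R) :
    clearedMacdonald q t' ρ f ∈ wheelIdeal k r n t q :=
  clearedMacdonald_mem (shiftVars_mem_wheelIdeal hr hq hf) t' ρ

/-- if `f ∈ F_n^{(k,r)}` satisfies the wheel condition, then so does
`D_n^ρ(q,t̃) f` for every `ρ ∈ {0,…,n}` and `t̃ ∈ ℂ`.  This is stated in the equivalent
denominator-cleared form: the polynomial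
`h = Σ_{|I|=ρ} t̃^{ρ(ρ-1)/2} ∏_{i∈I,j∉I}(t̃x_i - x_j) · ∏_{(i,j): i≠j, ¬(i∈I ∧ j∉I)}(x_i - x_j) · T_I f`,
which equals `∏_{i≠j}(x_i - x_j) · D_n^ρ(q,t̃) f`, vanishes identically on every plane
`x_i = t^{i-1} q^{s_i} x_1` (`2 ≤ i ≤ k+1`), `s_i ∈ {0,…,r-2}`. -/
theorem macdonald_operator_preserves_wheel_condition
    (k r n : ℕ) (hk : 0 < k) (hr : 2 ≤ r) (hcop : Nat.Coprime (k + 1) (r - 1))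
    (t q : ℂ) (ht : IsPrimitiveRoot t (k + 1)) (hq : IsPrimitiveRoot q (r - 1))
    (hn : k + 1 ≤ n)
    (f : MvPolynomial (Fin n) ℂ) (hsym : f.IsSymmetric)
    (hf : ∀ (s : ℕ → ℕ), (∀ i, s i ≤ r - 2) → ∀ (x : ℂ) (y : Fin n → ℂ),
      MvPolynomial.eval
        (fun j : Fin n => if (j : ℕ) = 0 then x
          else if (j : ℕ) ≤ k then t ^ (j : ℕ) * q ^ (s (j : ℕ)) * x else y j) f = 0)
    (ρ : ℕ) (hρ : ρ ≤ n) (t' : ℂ) :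
    ∀ (s : ℕ → ℕ), (∀ i, s i ≤ r - 2) → ∀ (x : ℂ) (y : Fin n → ℂ),
      MvPolynomial.eval
        (fun j : Fin n => if (j : ℕ) = 0 then x
          else if (j : ℕ) ≤ k then t ^ (j : ℕ) * q ^ (s (j : ℕ)) * x else y j)
        (∑ I ∈ Finset.powersetCard ρ (Finset.univ : Finset (Fin n)),
          (t' ^ (ρ * (ρ - 1) / 2)) •
            ((∏ p ∈ Finset.univ.filter
                (fun p : Fin n × Fin n => p.1 ∈ I ∧ p.2 ∉ I),
                (MvPolynomial.C t' * MvPolynomial.X p.1 - MvPolynomial.X p.2)) *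
              (∏ p ∈ Finset.univ.filter
                (fun p : Fin n × Fin n => p.1 ≠ p.2 ∧ ¬(p.1 ∈ I ∧ p.2 ∉ I)),
                (MvPolynomial.X p.1 - MvPolynomial.X p.2)) *
              (MvPolynomial.aeval
                (fun i : Fin n => if i ∈ I then MvPolynomial.C q * MvPolynomial.X i
                  else MvPolynomial.X i) f))) = 0 :=
  mem_wheelIdeal_iff_eval_wheelPoint.1 <|
    macdonald_operator_preserves_wheel_condition_general hr hq.pow_eq_one
      (mem_wheelIdeal_iff_eval_wheelPoint.2 hf) ρ t'
end

section
/- Let h = Σ_{i=1}^s f_i g_i be a symmetric polynomial, where g_1,…,g_s are symmetric polynomials whose highest partitions are (r−1)-slim and pairwise distinct, and each f_i = 𝓕(f̃_i) is the Frobenius image of a symmetric polynomial f̃_i. Then h ∈ F_n^{(k,r)} if and only if f̃_i ∈ F_n^{(k,2)} for every i = 1,…,s. -/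
open MvPolynomial

/-- The Frobenius homomorphism `𝓕 : f(x_1,…,x_n) ↦ f(x_1^{r-1},…,x_n^{r-1})`. -/
noncomputable def Frob (r n : ℕ) (f : MvPolynomial (Fin n) ℂ) : MvPolynomial (Fin n) ℂ :=
  (MvPolynomial.aeval fun i : Fin n =>
    (MvPolynomial.X i : MvPolynomial (Fin n) ℂ) ^ (r - 1)) f

/-!
Put `N = r - 1`. The points whose coordinates are those of a point `z` multiplied by `N`-th roots
of unity all have the same `N`-th powers, so each `𝓕(f̃ᵢ)` is constant, equal to `f̃ᵢ(z ^ N)`, on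
this fibre. Hence `h` vanishes on the fibre as soon as all `f̃ᵢ(z ^ N)` do, and the converse holds
once the `gᵢ` are linearly independent on the fibre.

Slim partitions are those whose consecutive differences lie in `{0, …, N-1}`. Complete the `gᵢ` to
a family `G` containing one symmetric polynomial for each of the `N ^ n` slim leading exponents.
Division with remainder by `N` on the differences shows that `G` generates the symmetric
polynomials over the polynomials in the `N`-th powers. If the coordinates of `z` are nonzero with
distinct `N`-th powers, the `N ^ n` evaluations at the points of the fibre are distinct characters
of the symmetric polynomials, hence linearly independent, and they stay so when restricted to `G`.
The resulting matrix is square, so the members of `G` are independent on the fibre as well.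

If `z` runs over wheel points for `t`, then `z ^ N` runs over wheel points for `t ^ N`, which by
coprimality is again a primitive `(k+1)`-th root of unity and gives the same points up to a
permutation. The genericity condition on `z` is removed by density.
-/

namespace FrobeniusWheel

open scoped MonomialOrder
open MonomialOrder (lex)

section LeadingExponents

variable {σ R : Type*} [CommSemiring R] (m : MonomialOrder σ)

theorem sum_ne_zero_and_degree_sum_eq {ι : Type*} {s : Finset ι} {f : ι → MvPolynomial σ R} {i : ι}
    (hi : i ∈ s) (hfi : f i ≠ 0)
    (hlt : ∀ j ∈ s, j ≠ i → m.degree (f j) ≺[m] m.degree (f i)) :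
    ∑ j ∈ s, f j ≠ 0 ∧ m.degree (∑ j ∈ s, f j) = m.degree (f i) := by
  have hcoeff : (∑ j ∈ s, f j).coeff (m.degree (f i)) = m.leadingCoeff (f i) := by
    rw [coeff_sum]
    exact Finset.sum_eq_single_of_mem i hi fun j hj hji =>
      m.coeff_eq_zero_of_lt (hlt j hj hji)
  have hmem : m.degree (f i) ∈ (∑ j ∈ s, f j).support := by
    rwa [mem_support_iff, hcoeff, m.leadingCoeff_ne_zero_iff]
  refine ⟨support_nonempty.1 ⟨_, hmem⟩, m.toSyn.injective (le_antisymm ?_ (m.le_degree hmem))⟩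
  refine m.degree_sum_le.trans (Finset.sup_le fun j hj => ?_)
  rcases eq_or_ne j i with rfl | hji
  · exact le_rfl
  · exact (hlt j hj hji).le

theorem degree_expand {p : ℕ} (hp : p ≠ 0) (f : MvPolynomial σ R) :
    m.degree (expand p f) = p • m.degree f := by
  classical
  obtain rfl | hf := eq_or_ne f 0
  · simp
  refine m.toSyn.injective (le_antisymm (m.degree_le_iff.2 fun a ha => ?_) (m.le_degree ?_))
  · rw [support_expand _ hp, Finset.mem_image] at ha
    obtain ⟨b, hb, rfl⟩ := ha
    simpa only [map_nsmul] using nsmul_le_nsmul_right (m.le_degree hb) p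
  · rw [mem_support_iff, coeff_expand_smul _ hp]
    exact m.coeff_degree_ne_zero_iff.2 hf

theorem isSymmetric_expand {f : MvPolynomial σ R} (hf : f.IsSymmetric) (p : ℕ) :
    (expand p f).IsSymmetric := fun e => by
  rw [rename_expand, hf e]

variable {n : ℕ}

theorem antitone_lex_degree {f : MvPolynomial (Fin n) R} (hf : f.IsSymmetric) :
    Antitone (lex.degree f) :=
  hf.antitone_supDegree

theorem esymmAlgHomMonomial_one_ne_zero [Nontrivial R] (d : Fin n →₀ ℕ) :
    esymmAlgHomMonomial (Fin n) d (1 : R) ≠ 0 := by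
  rw [← AddMonoidAlgebra.leadingCoeff_ne_zero toLex.injective,
    leadingCoeff_esymmAlgHomMonomial d le_rfl]
  exact one_ne_zero

theorem lex_degree_esymmAlgHomMonomial_one [Nontrivial R] (d : Fin n →₀ ℕ) :
    lex.degree (esymmAlgHomMonomial (Fin n) d (1 : R)) = Fin.accumulate n n d :=
  supDegree_esymmAlgHomMonomial one_ne_zero d le_rfl

end LeadingExponents

section HighestPartition

variable {n : ℕ}

theorem mem_support_msym {ν : Fin n → ℕ} {a : Fin n →₀ ℕ} :
    a ∈ (msym n ν).support ↔ ∃ w : Equiv.Perm (Fin n), ν ∘ w = a := by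
  classical
  have hsymm (b : Fin n → ℕ) : Finsupp.equivFunOnFinite.symm b = a ↔ b = a :=
    Equiv.symm_apply_eq _
  simp [msym, coeff_sum, coeff_monomial, hsymm]

theorem isSymmetric_msym (ν : Fin n → ℕ) : (msym n ν).IsSymmetric := by
  intro e
  simp only [msym, map_sum, rename_monomial]
  refine Finset.sum_equiv (e.arrowCongr (Equiv.refl ℕ)) (fun a => ?_) fun a _ => ?_
  · simp only [Finset.mem_image, Finset.mem_univ, true_and]
    constructor
    · rintro ⟨w, rfl⟩
      exact ⟨e.symm.trans w, rfl⟩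
    · rintro ⟨w, hw⟩
      refine ⟨e.trans w, funext fun j => ?_⟩
      simpa using congrFun hw (e j)
  · refine congrArg (monomial · 1) (Finsupp.ext fun j => ?_)
    simp [Finsupp.mapDomain_equiv_apply]

theorem msym_ne_zero (ν : Fin n → ℕ) : msym n ν ≠ 0 :=
  support_nonempty.1 ⟨Finsupp.equivFunOnFinite.symm ν, mem_support_msym.2 ⟨1, rfl⟩⟩

-- The leading exponent is a rearrangement of `ν` and is antitone because `msym n ν` is symmetric.
theorem lex_degree_msym {ν : Fin n → ℕ} (hν : Antitone ν) : lex.degree (msym n ν) = ν := by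
  obtain ⟨w, hw⟩ := mem_support_msym.1 (lex.degree_mem_support (msym_ne_zero ν))
  have hanti : Antitone (ν ∘ w) := hw ▸ antitone_lex_degree (isSymmetric_msym ν)
  exact hw.symm.trans (Tuple.unique_antitone (τ := 1) hanti hν)

theorem lex_lt_of_domLT {a b : Fin n →₀ ℕ} (hab : DomLT n a b) : a ≺[lex] b := by
  rw [MonomialOrder.lex_lt_iff]
  by_contra hba
  obtain ⟨hne, -, hsum⟩ := hab
  have hlt : toLex b < toLex a :=
    (not_lt.1 hba).lt_of_ne fun h => hne (congrArg (⇑) (toLex.injective h.symm))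
  obtain ⟨i, heq, hi⟩ := Finsupp.Lex.lt_iff.1 hlt
  refine (hsum i).not_gt (Finset.sum_lt_sum (fun j hj => ?_) ⟨i, by simp, hi⟩)
  rcases (Finset.mem_filter.1 hj).2.lt_or_eq with hji | rfl
  · exact (heq j hji).le
  · exact hi.le

theorem isSymmetric_of_highestPartition {g : MvPolynomial (Fin n) ℂ} {μ : Fin n → ℕ}
    (hg : HighestPartition n g μ) : g.IsSymmetric := by
  obtain ⟨S, c, -, -, -, rfl⟩ := hg
  exact (symmetricSubalgebra (Fin n) ℂ).sum_mem fun ν _ => (isSymmetric_msym ν).smul (c ν)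

theorem ne_zero_and_lex_degree_eq_of_highestPartition {g : MvPolynomial (Fin n) ℂ}
    {μ : Fin n → ℕ} (hg : HighestPartition n g μ) : g ≠ 0 ∧ lex.degree g = μ := by
  obtain ⟨S, c, hμS, hcμ, hS, rfl⟩ := hg
  have hdeg (ν) (hν : ν ∈ S) : lex.degree (msym n ν) = ν := lex_degree_msym (hS ν hν).1
  have hdegμ : lex.degree (c μ • msym n μ) = lex.degree (msym n μ) :=
    lex.degree_smul_of_isRegular (IsRegular.of_ne_zero hcμ)
  obtain ⟨hne, hsum⟩ := sum_ne_zero_and_degree_sum_eq lex (f := fun ν => c ν • msym n ν) hμS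
    (smul_ne_zero hcμ (msym_ne_zero μ)) fun ν hν hνμ => by
      rw [hdegμ]
      refine lex.degree_smul_le.trans_lt (lex_lt_of_domLT ?_)
      rw [hdeg ν hν, hdeg μ hμS]
      exact (hS ν hν).2.resolve_left hνμ
  exact ⟨hne, by rw [hsum, hdegμ, hdeg μ hμS]⟩

theorem invAccumulate_lt_of_isSlim {r : ℕ} {l : Fin n → ℕ} (hl : IsSlim r n l) (i : Fin n) :
    Fin.invAccumulate n n l i < r - 1 := by
  rw [Fin.invAccumulate, dif_pos i.2]
  split_ifs with hi
  · exact hl.1 i hi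
  · exact hl.2 i (by omega)

end HighestPartition

section Reduction

variable {σ K : Type*} [Field K]

theorem exists_sub_smul_eq_zero_or_degree_lt (m : MonomialOrder σ) {f g : MvPolynomial σ K}
    (hg : g ≠ 0) (hdeg : m.degree g = m.degree f) :
    ∃ c : K, f - c • g = 0 ∨ m.degree (f - c • g) ≺[m] m.degree f := by
  refine ⟨m.leadingCoeff f / m.leadingCoeff g, or_iff_not_imp_left.2 fun hne => ?_⟩
  refine lt_of_le_of_ne ?_ fun heq => hne (m.coeff_degree_eq_zero_iff.1 ?_)
  · refine m.degree_sub_le.trans (sup_le le_rfl ?_)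
    exact m.degree_smul_le.trans_eq (congrArg m.toSyn hdeg)
  · have hcancel := div_mul_cancel₀ (m.leadingCoeff f) (m.leadingCoeff_ne_zero_iff.2 hg)
    rw [m.toSyn.injective heq, coeff_sub, coeff_smul, smul_eq_mul, sub_eq_zero]
    simpa only [MonomialOrder.leadingCoeff, hdeg] using hcancel.symm

variable {n N : ℕ}

/-- A family of symmetric polynomials indexed by the digit vectors `d ∈ {0, …, N-1}ⁿ`, whose
member at `d` has as lexicographically leading exponent the partition with consecutive
differences `d`. These partitions are exactly the `N`-slim ones, and the family generates the
symmetric polynomials over the polynomials in the `N`-th powers of the variables. -/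
structure IsSlimFamily (G : (Fin n → Fin N) → MvPolynomial (Fin n) K) : Prop where
  isSymmetric (d) : (G d).IsSymmetric
  ne_zero (d) : G d ≠ 0
  lex_degree (d) : lex.degree (G d) = Fin.accumulate n n fun j => (d j : ℕ)

namespace IsSlimFamily

variable [NeZero N] {G : (Fin n → Fin N) → MvPolynomial (Fin n) K}

theorem exists_lex_degree_expand_mul_eq (hG : IsSlimFamily G) {l : Fin n →₀ ℕ} (hl : Antitone l) :
    ∃ (h : MvPolynomial (Fin n) K) (d : Fin n → Fin N), h.IsSymmetric ∧
      expand N h * G d ≠ 0 ∧ lex.degree (expand N h * G d) = l := by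
  let a : Fin n → ℕ := Fin.invAccumulate n n l
  let quot : Fin n →₀ ℕ := Finsupp.equivFunOnFinite.symm fun j => a j / N
  let h := esymmAlgHomMonomial (Fin n) quot (1 : K)
  let d : Fin n → Fin N := fun j => ⟨a j % N, Nat.mod_lt _ (NeZero.pos N)⟩
  have hh : expand N h ≠ 0 := (expand_ne_zero (NeZero.pos N)).2 (esymmAlgHomMonomial_one_ne_zero _)
  refine ⟨h, d, isSymmetric_esymmAlgHomMonomial _ _, mul_ne_zero hh (hG.ne_zero d), ?_⟩
  apply DFunLike.coe_injective
  have hdigits : N • ⇑quot + (fun j => (d j : ℕ)) = a := funext fun j => Nat.div_add_mod _ _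
  calc ⇑(lex.degree (expand N h * G d))
      = N • ⇑(lex.degree h) + ⇑(lex.degree (G d)) := by
        rw [lex.degree_mul hh (hG.ne_zero d), degree_expand lex (NeZero.ne N)]; rfl
    _ = Fin.accumulate n n (N • ⇑quot + fun j => (d j : ℕ)) := by
        rw [lex_degree_esymmAlgHomMonomial_one, hG.lex_degree, map_add, map_nsmul]
    _ = l := by rw [hdigits, Fin.accumulate_invAccumulate le_rfl hl]

theorem exists_sum_expand_mul_eq (hG : IsSlimFamily G) {f : MvPolynomial (Fin n) K}
    (hf : f.IsSymmetric) :
    ∃ c : (Fin n → Fin N) → MvPolynomial (Fin n) K, ∑ d, expand N (c d) * G d = f := by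
  induction hd : lex.toSyn (lex.degree f) using WellFoundedLT.induction generalizing f with
  | ind _ ih =>
    subst hd
    obtain ⟨h, d, hh, hne, hdeg⟩ := hG.exists_lex_degree_expand_mul_eq (antitone_lex_degree hf)
    obtain ⟨a, ha⟩ := exists_sub_smul_eq_zero_or_degree_lt lex hne hdeg
    have hsymm : (f - a • (expand N h * G d)).IsSymmetric :=
      hf.sub (((isSymmetric_expand hh N).mul (hG.isSymmetric d)).smul a)
    obtain ⟨c, hc⟩ : ∃ c : (Fin n → Fin N) → MvPolynomial (Fin n) K,
        ∑ d, expand N (c d) * G d = f - a • (expand N h * G d) := by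
      obtain hzero | hlt := ha
      · exact ⟨0, by simp [hzero]⟩
      · exact ih _ hlt hsymm rfl
    refine ⟨c + Pi.single d (a • h), ?_⟩
    simp [add_mul, Finset.sum_add_distrib, hc, Pi.single_apply, apply_ite (expand N), ite_mul]

end IsSlimFamily

end Reduction

section Separation

variable {σ K : Type*} [Field K]

theorem exists_apply_eq_of_forall_isSymmetric_eval_eq [Finite σ] {p p' : σ → K}
    (h : ∀ f : MvPolynomial σ K, f.IsSymmetric → eval p f = eval p' f) (j : σ) :
    ∃ i, p i = p' j := by
  cases nonempty_fintype σ
  have hsymm : (∏ i, (X i - C (p' j)) : MvPolynomial σ K).IsSymmetric := fun e => by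
    simpa using Equiv.prod_comp e fun i => (X i - C (p' j) : MvPolynomial σ K)
  have heval : ∏ i, (p i - p' j) = ∏ i, (p' i - p' j) := by simpa using h _ hsymm
  have hzero : ∏ i, (p i - p' j) = 0 :=
    heval.trans (Finset.prod_eq_zero (Finset.mem_univ j) (sub_self _))
  obtain ⟨i, -, hi⟩ := Finset.prod_eq_zero_iff.1 hzero
  exact ⟨i, sub_eq_zero.1 hi⟩

/-- The point `z` with its coordinates rescaled by the powers `q ^ a j`. For `q` an `N`-th root of
unity these are points with the same coordinatewise `N`-th powers as `z`. -/
def twist (q : K) (a : σ → ℕ) (z : σ → K) : σ → K := fun j => q ^ a j * z j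

theorem twist_pow {q : K} {N : ℕ} (hq : q ^ N = 1) (a : σ → ℕ) (z : σ → K) :
    twist q a z ^ N = z ^ N := by
  ext j
  simp [twist, mul_pow, pow_right_comm, hq]

theorem eq_of_forall_isSymmetric_eval_twist_eq [Finite σ] {N : ℕ} {q : K}
    (hq : IsPrimitiveRoot q N) {z : σ → K} (hz₀ : ∀ j, z j ≠ 0)
    (hz : Function.Injective (z ^ N)) {a b : σ → Fin N}
    (h : ∀ f : MvPolynomial σ K, f.IsSymmetric →
      eval (twist q (fun j => a j) z) f = eval (twist q (fun j => b j) z) f) : a = b := by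
  ext j
  obtain ⟨i, hi⟩ := exists_apply_eq_of_forall_isSymmetric_eval_eq h j
  have hpow : (z ^ N) i = (z ^ N) j := calc
    (z ^ N) i = twist q (fun j => a j) z i ^ N := (congrFun (twist_pow hq.pow_eq_one _ z) i).symm
    _ = twist q (fun j => b j) z j ^ N := congrArg (· ^ N) hi
    _ = (z ^ N) j := congrFun (twist_pow hq.pow_eq_one _ z) j
  obtain rfl := hz hpow
  exact hq.pow_inj (a i).2 (b i).2 (mul_right_cancel₀ (hz₀ i) hi)

variable {n N : ℕ} {ι : Type*} {g : ι → MvPolynomial (Fin n) K}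

theorem exists_isSlimFamily_extending (hsymm : ∀ i, (g i).IsSymmetric) (hne : ∀ i, g i ≠ 0)
    (hslim : ∀ i j, Fin.invAccumulate n n (lex.degree (g i)) j < N)
    (hinj : Function.Injective fun i => lex.degree (g i)) :
    ∃ (G : (Fin n → Fin N) → MvPolynomial (Fin n) K) (δ : ι → Fin n → Fin N),
      IsSlimFamily G ∧ Function.Injective δ ∧ ∀ i, G (δ i) = g i := by
  let δ (i : ι) (j : Fin n) : Fin N := ⟨_, hslim i j⟩
  let e (d : Fin n → Fin N) : MvPolynomial (Fin n) K :=
    esymmAlgHomMonomial (Fin n) (Finsupp.equivFunOnFinite.symm fun j => (d j : ℕ)) 1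
  have hacc (i : ι) : lex.degree (g i) = Fin.accumulate n n fun j => (δ i j : ℕ) :=
    (Fin.accumulate_invAccumulate le_rfl (antitone_lex_degree (hsymm i))).symm
  have hδ : Function.Injective δ := fun i i' h =>
    hinj (DFunLike.coe_injective (by rw [hacc, hacc, h]))
  have hcases (Q : (Fin n → Fin N) → MvPolynomial (Fin n) K → Prop) (hg : ∀ i, Q (δ i) (g i))
      (he : ∀ d, Q d (e d)) (d) : Q d (Function.extend δ g e d) := by
    by_cases hd : ∃ i, δ i = d
    · obtain ⟨i, rfl⟩ := hd
      simpa only [hδ.extend_apply] using hg i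
    · simpa only [Function.extend_apply' g e d hd] using he d
  refine ⟨Function.extend δ g e, δ, ⟨?_, ?_, ?_⟩, hδ, hδ.extend_apply g e⟩
  · exact hcases (fun _ f => f.IsSymmetric) hsymm fun _ => isSymmetric_esymmAlgHomMonomial _ _
  · exact hcases (fun _ f => f ≠ 0) hne fun _ => esymmAlgHomMonomial_one_ne_zero _
  · exact hcases (fun d f => lex.degree f = Fin.accumulate n n fun j => (d j : ℕ)) hacc
      fun _ => lex_degree_esymmAlgHomMonomial_one _

variable [NeZero N]

-- The evaluations at the `p a` are distinct characters of the algebra of symmetric polynomials,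
-- and each is determined by its values on `G` since all `p a` have the same `N`-th powers.
theorem IsSlimFamily.linearIndependent_eval {G : (Fin n → Fin N) → MvPolynomial (Fin n) K}
    (hG : IsSlimFamily G) {A : Type*} {p : A → Fin n → K} {w : Fin n → K}
    (hw : ∀ a, p a ^ N = w)
    (hp : ∀ a b, (∀ f : MvPolynomial (Fin n) K, f.IsSymmetric → eval (p a) f = eval (p b) f) →
      a = b) :
    LinearIndependent K fun a d => eval (p a) (G d) := by
  let χ (a : A) : symmetricSubalgebra (Fin n) K →* K :=
    (eval (p a)).toMonoidHom.comp (symmetricSubalgebra (Fin n) K).val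
  have hχ : Function.Injective χ := fun a b hab =>
    hp a b fun f hf => DFunLike.congr_fun hab ⟨f, hf⟩
  choose c hc using fun f : symmetricSubalgebra (Fin n) K => hG.exists_sum_expand_mul_eq f.2
  let L := Matrix.mulVecLin (Matrix.of fun f d => eval w (c f d))
  have hL : L ∘ (fun a d => eval (p a) (G d)) = fun a => ⇑(χ a) := by
    ext a f
    calc L (fun d => eval (p a) (G d)) f
        = ∑ d, eval w (c f d) * eval (p a) (G d) := rfl
      _ = eval (p a) (∑ d, expand N (c f d) * G d) := by simp [eval_expand, hw]
      _ = χ a f := congrArg (eval (p a)) (hc f)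
  refine LinearIndependent.of_comp L ?_
  rw [hL]
  exact (linearIndependent_monoidHom _ K).comp χ hχ

theorem IsSlimFamily.linearIndependent_eval_twist
    {G : (Fin n → Fin N) → MvPolynomial (Fin n) K} (hG : IsSlimFamily G) {q : K}
    (hq : IsPrimitiveRoot q N) {z : Fin n → K} (hz₀ : ∀ j, z j ≠ 0)
    (hz : Function.Injective (z ^ N)) :
    LinearIndependent K fun d (a : Fin n → Fin N) => eval (twist q (fun j => a j) z) (G d) := by
  let M : Matrix (Fin n → Fin N) (Fin n → Fin N) K :=
    Matrix.of fun a d => eval (twist q (fun j => a j) z) (G d)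
  have hrows : LinearIndependent K M.row :=
    hG.linearIndependent_eval (fun _ => twist_pow hq.pow_eq_one _ z) fun _ _ =>
      eq_of_forall_isSymmetric_eval_twist_eq hq hz₀ hz
  have hM : IsUnit M := Matrix.linearIndependent_rows_iff_isUnit.1 hrows
  exact Matrix.linearIndependent_cols_iff_isUnit.2 hM

theorem eval_pow_eq_zero_of_forall_eval_twist_eq_zero [Fintype ι]
    (hsymm : ∀ i, (g i).IsSymmetric) (hne : ∀ i, g i ≠ 0)
    (hslim : ∀ i j, Fin.invAccumulate n n (lex.degree (g i)) j < N)
    (hinj : Function.Injective fun i => lex.degree (g i))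
    {q : K} (hq : IsPrimitiveRoot q N) {z : Fin n → K} (hz₀ : ∀ j, z j ≠ 0)
    (hz : Function.Injective (z ^ N)) {f : ι → MvPolynomial (Fin n) K}
    (h : ∀ a : Fin n → ℕ, eval (twist q a z) (∑ i, expand N (f i) * g i) = 0) (i : ι) :
    eval (z ^ N) (f i) = 0 := by
  obtain ⟨G, δ, hG, hδ, hGδ⟩ := exists_isSlimFamily_extending hsymm hne hslim hinj
  have hindep := (hG.linearIndependent_eval_twist hq hz₀ hz).comp δ hδ
  refine Fintype.linearIndependent_iff.1 hindep (fun i => eval (z ^ N) (f i)) ?_ i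
  ext a
  simpa [eval_expand, twist_pow hq.pow_eq_one, hGδ] using h fun j => a j

end Separation

section GenericPoints

variable {σ τ K : Type*} [Field K] [Infinite K]

theorem eval_eq_zero_of_forall_generic_pow [Finite σ] {N : ℕ} (hN : 0 < N)
    {P : σ → MvPolynomial τ K} (hP₀ : ∀ j, P j ≠ 0) (hP : Function.Injective P)
    {f : MvPolynomial σ K}
    (hf : ∀ u : τ → K, (∀ j, eval (u ^ N) (P j) ≠ 0) →
      Function.Injective (fun j => eval (u ^ N) (P j)) → eval (fun j => eval (u ^ N) (P j)) f = 0)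
    (u : τ → K) : eval (fun j => eval u (P j)) f = 0 := by
  classical
  cases nonempty_fintype σ
  have heval (v : τ → K) : eval v (bind₁ P f) = eval (fun j => eval v (P j)) f :=
    eval₂Hom_bind₁ _ _ _ _
  let D := (∏ j, P j) * ∏ ij ∈ Finset.univ.offDiag, (P ij.1 - P ij.2)
  have hD : D ≠ 0 := mul_ne_zero (Finset.prod_ne_zero_iff.2 fun j _ => hP₀ j)
    (Finset.prod_ne_zero_iff.2 fun ij hij =>
      sub_ne_zero.2 (hP.ne (Finset.mem_offDiag.1 hij).2.2))
  have hgeneric (v : τ → K) (hv : eval (v ^ N) D ≠ 0) : eval (v ^ N) (bind₁ P f) = 0 := by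
    simp only [D, map_mul, map_prod, map_sub, mul_ne_zero_iff, Finset.prod_ne_zero_iff,
      Finset.mem_univ, Finset.mem_offDiag, true_and, true_implies, sub_ne_zero] at hv
    rw [heval]
    exact hf v hv.1 fun i j hij => by_contra fun hne => hv.2 (i, j) hne hij
  have hzero : expand N (bind₁ P f * D) = 0 := MvPolynomial.funext fun v => by
    rw [eval_expand, map_mul, map_zero]
    exact mul_eq_zero.2 (or_iff_not_imp_right.2 (hgeneric v))
  have hbind : bind₁ P f = 0 :=
    (mul_eq_zero.1 ((expand_eq_zero hN).1 hzero)).resolve_right hD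
  rw [← heval, hbind, map_zero]

end GenericPoints

section WheelPoints

variable {n : ℕ} {K : Type*} [Field K]

/-- The point `(x, t x, …, t ^ k x, y_{k+1}, …)` with coordinates counted from `0`, on which the
members of `F_n^{(k,2)}` vanish; the first `k + 1` entries of `y` play no role. -/
def wheelPoint {R : Type*} [CommSemiring R] (k : ℕ) (t x : R) (y : Fin n → R) : Fin n → R :=
  fun j => if (j : ℕ) ≤ k then t ^ (j : ℕ) * x else y j

/-- The point `(x, t q ^ s₁ x, …, t ^ k q ^ s_k x, y_{k+1}, …)` with coordinates counted from `0`,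
on which the members of `F_n^{(k,r)}` vanish. Only `s 1, …, s k` are used. -/
def twistedWheelPoint (k : ℕ) (t q : K) (s : ℕ → ℕ) (x : K) (y : Fin n → K) : Fin n → K :=
  fun j => if (j : ℕ) = 0 then x
    else if (j : ℕ) ≤ k then t ^ (j : ℕ) * q ^ s (j : ℕ) * x else y j

variable {k : ℕ} {t t' q x : K} {y : Fin n → K}

theorem wheelPoint_pow (N : ℕ) :
    wheelPoint k t x y ^ N = wheelPoint k (t ^ N) (x ^ N) (y ^ N) := by
  ext j
  simp only [wheelPoint, Pi.pow_apply, ite_pow, mul_pow, pow_right_comm]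

theorem exists_perm_wheelPoint_eq (hk : k < n) (ht : IsPrimitiveRoot t (k + 1))
    (ht' : IsPrimitiveRoot t' (k + 1)) :
    ∃ e : Equiv.Perm (Fin n), ∀ (x : K) (y : Fin n → K),
      wheelPoint k t' x y = wheelPoint k t x y ∘ e := by
  have hex (j : Fin n) : ∃ i : Fin n, if (j : ℕ) ≤ k then (i : ℕ) ≤ k ∧ t ^ (i : ℕ) = t' ^ (j : ℕ)
      else i = j := by
    split_ifs with hj
    · obtain ⟨i, hi, hpow⟩ := ht.eq_pow_of_pow_eq_one
        (show (t' ^ (j : ℕ)) ^ (k + 1) = 1 by rw [pow_right_comm, ht'.pow_eq_one, one_pow])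
      exact ⟨⟨i, by omega⟩, Nat.lt_succ_iff.1 hi, hpow⟩
    · exact ⟨j, rfl⟩
  choose φ hφ using hex
  have hφ_inj : Function.Injective φ := fun i j hij => by
    have hi := hφ i
    have hj := hφ j
    rw [hij] at hi
    split_ifs at hi hj with hik hjk hjk
    · exact Fin.ext (ht'.pow_inj (by omega) (by omega) (hi.2.symm.trans hj.2))
    · exact absurd (hj ▸ hi.1) hjk
    · exact absurd (hi ▸ hj.1) hik
    · exact hi.symm.trans hj
  refine ⟨Equiv.ofBijective φ hφ_inj.bijective_of_finite, fun x y => funext fun j => ?_⟩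
  have hj := hφ j
  simp only [wheelPoint, Function.comp_apply, Equiv.ofBijective_apply]
  split_ifs at hj with hjk
  · rw [if_pos hjk, if_pos hj.1, hj.2]
  · rw [if_neg hjk, hj, if_neg hjk]

theorem eval_wheelPoint_eq_of_isPrimitiveRoot (hk : k < n) (ht : IsPrimitiveRoot t (k + 1))
    (ht' : IsPrimitiveRoot t' (k + 1)) {f : MvPolynomial (Fin n) K} (hf : f.IsSymmetric) :
    eval (wheelPoint k t' x y) f = eval (wheelPoint k t x y) f := by
  obtain ⟨e, he⟩ := exists_perm_wheelPoint_eq hk ht ht'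
  rw [he, ← eval_rename, hf e]

theorem twistedWheelPoint_pow {N : ℕ} (hq : q ^ N = 1) (s : ℕ → ℕ) :
    twistedWheelPoint k t q s x y ^ N = wheelPoint k t x y ^ N := by
  ext j
  simp only [twistedWheelPoint, wheelPoint, Pi.pow_apply]
  split_ifs with hj hjk
  · simp [hj]
  · omega
  · rw [mul_pow, mul_pow, mul_pow, pow_right_comm q, hq, one_pow, mul_one]
  · rfl

-- The twist of the coordinate `0` is absorbed into `x`.
theorem exists_twistedWheelPoint_eq_twist {N : ℕ} [NeZero N] (hq : IsPrimitiveRoot q N)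
    (a : Fin n → ℕ) :
    ∃ s : ℕ → ℕ, (∀ i, s i < N) ∧ ∃ (x' : K) (y' : Fin n → K),
      twistedWheelPoint k t q s x' y' = twist q a (wheelPoint k t x y) := by
  let b (i : ℕ) : ℕ := if h : i < n then a ⟨i, h⟩ else 0
  have hb (j : Fin n) : b j = a j := dif_pos j.2
  have hroot (i : ℕ) : (q ^ b i * (q ^ b 0)⁻¹) ^ N = 1 := by
    simp [mul_pow, pow_right_comm q _ N, hq.pow_eq_one]
  choose s hs hpow using fun i => hq.eq_pow_of_pow_eq_one (hroot i)
  have hq₀ : q ^ b 0 ≠ 0 := pow_ne_zero _ (hq.ne_zero (NeZero.ne N))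
  refine ⟨s, hs, q ^ b 0 * x, fun j => q ^ a j * y j, funext fun j => ?_⟩
  simp only [twistedWheelPoint, twist, wheelPoint, hpow, ← hb]
  split_ifs with hj hjk
  · simp [hj]
  · omega
  · field_simp
  · rfl

theorem eval_wheelPoint_X (u : Option (Fin n) → K) (j : Fin n) :
    eval u (wheelPoint k (C t) (X none) (fun i => X (some i)) j) =
      wheelPoint k t (u none) (fun i => u (some i)) j := by
  simp only [wheelPoint]
  split_ifs <;> simp

theorem wheelPoint_X_ne_zero (ht : t ≠ 0) (j : Fin n) :
    wheelPoint k (C t) (X none) (fun i => X (some i) : Fin n → MvPolynomial (Option (Fin n)) K) j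
      ≠ 0 := by
  simp only [wheelPoint]
  split_ifs <;> simp [ht]

theorem wheelPoint_X_injective (ht : IsPrimitiveRoot t (k + 1)) :
    Function.Injective (wheelPoint k (C t) (X none)
      (fun i => X (some i) : Fin n → MvPolynomial (Option (Fin n)) K)) := by
  intro i j hij
  have heval (u : Option (Fin n) → K) : wheelPoint k t (u none) (fun i => u (some i)) i =
      wheelPoint k t (u none) (fun i => u (some i)) j := by
    simpa only [eval_wheelPoint_X] using congrArg (eval u) hij
  by_cases hi : (i : ℕ) ≤ k
  · have hpow := heval (Pi.single none 1)
    by_cases hj : (j : ℕ) ≤ k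
    · simp only [wheelPoint, if_pos hi, if_pos hj, Pi.single_eq_same, mul_one] at hpow
      exact Fin.ext (ht.pow_inj (by omega) (by omega) hpow)
    · simp [wheelPoint, hi, hj, ht.ne_zero] at hpow
  · have hvar := heval (Pi.single (some i) 1)
    by_contra hne
    simp [wheelPoint, hi, Ne.symm hne] at hvar

theorem eval_wheelPoint_eq_zero_of_forall_generic_pow [Infinite K] {N : ℕ} (hN : 0 < N)
    (ht : IsPrimitiveRoot t (k + 1)) {f : MvPolynomial (Fin n) K}
    (hf : ∀ (x : K) (y : Fin n → K), (∀ j, wheelPoint k t (x ^ N) (y ^ N) j ≠ 0) →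
      Function.Injective (wheelPoint k t (x ^ N) (y ^ N)) →
      eval (wheelPoint k t (x ^ N) (y ^ N)) f = 0)
    (x : K) (y : Fin n → K) : eval (wheelPoint k t x y) f = 0 := by
  have hgeneric := eval_eq_zero_of_forall_generic_pow hN
    (wheelPoint_X_ne_zero (ht.ne_zero k.succ_ne_zero)) (wheelPoint_X_injective ht) (f := f)
  simp only [eval_wheelPoint_X] at hgeneric
  exact hgeneric (fun u => hf (u none) fun i => u (some i)) fun o => o.elim x y

end WheelPoints

end FrobeniusWheel

open FrobeniusWheel in
theorem separating_frobenius_coefficients_general {K : Type*} [Field K] [Infinite K] {k r n : ℕ}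
    (hr : 2 ≤ r) (hcop : Nat.Coprime (k + 1) (r - 1)) {t q : K}
    (ht : IsPrimitiveRoot t (k + 1)) (hq : IsPrimitiveRoot q (r - 1)) (hn : k < n)
    {ι : Type*} [Fintype ι] {g f : ι → MvPolynomial (Fin n) K}
    (hsymm : ∀ i, (g i).IsSymmetric) (hne : ∀ i, g i ≠ 0)
    (hslim : ∀ i, IsSlim r n (MonomialOrder.lex.degree (g i)))
    (hinj : Function.Injective fun i => MonomialOrder.lex.degree (g i))
    (hf : ∀ i, (f i).IsSymmetric) :
    ((∑ i, expand (r - 1) (f i) * g i).IsSymmetric ∧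
      ∀ s : ℕ → ℕ, (∀ i, s i ≤ r - 2) → ∀ (x : K) (y : Fin n → K),
        eval (twistedWheelPoint k t q s x y) (∑ i, expand (r - 1) (f i) * g i) = 0) ↔
    ∀ i, ∀ (x : K) (y : Fin n → K), eval (wheelPoint k t x y) (f i) = 0 := by
  have hN : 0 < r - 1 := by omega
  have : NeZero (r - 1) := ⟨hN.ne'⟩
  have htN : IsPrimitiveRoot (t ^ (r - 1)) (k + 1) := ht.pow_of_coprime _ hcop.symm
  constructor
  · rintro ⟨-, hvanish⟩ i x y
    rw [← eval_wheelPoint_eq_of_isPrimitiveRoot hn ht htN (hf i)]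
    refine eval_wheelPoint_eq_zero_of_forall_generic_pow hN htN (fun x y hz₀ hz => ?_) x y
    rw [← wheelPoint_pow] at hz₀ hz ⊢
    refine eval_pow_eq_zero_of_forall_eval_twist_eq_zero hsymm hne
      (fun i => invAccumulate_lt_of_isSlim (hslim i)) hinj hq
      (fun j => ne_zero_pow hN.ne' (hz₀ j)) hz (fun a => ?_) i
    obtain ⟨s, hs, x', y', htwist⟩ := exists_twistedWheelPoint_eq_twist hq a
    rw [← htwist]
    exact hvanish s (fun i => by have := hs i; omega) x' y'
  · refine fun hwheel => ⟨?_, fun s _ x y => ?_⟩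
    · exact (symmetricSubalgebra (Fin n) K).sum_mem fun i _ =>
        (isSymmetric_expand (hf i) _).mul (hsymm i)
    · rw [map_sum]
      refine Finset.sum_eq_zero fun i _ => ?_
      rw [map_mul, eval_expand, twistedWheelPoint_pow hq.pow_eq_one, wheelPoint_pow,
        eval_wheelPoint_eq_of_isPrimitiveRoot hn ht htN (hf i), hwheel, zero_mul]

/-- let `h = Σ_{i=1}^s f_i g_i` with the `g_i` symmetric polynomials whose
highest partitions `μ_i` are `(r-1)`-slim and pairwise distinct, and `f_i = 𝓕(f̃_i)`
Frobenius images of symmetric polynomials `f̃_i`.  Then `h ∈ F_n^{(k,r)}` if and only if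
every `f̃_i ∈ F_n^{(k,2)}`. -/
theorem separating_frobenius_coefficients
    (k r n : ℕ) (hk : 0 < k) (hr : 2 ≤ r) (hcop : Nat.Coprime (k + 1) (r - 1))
    (t q : ℂ) (ht : IsPrimitiveRoot t (k + 1)) (hq : IsPrimitiveRoot q (r - 1))
    (hn : k < n)
    (s : ℕ) (g : Fin s → MvPolynomial (Fin n) ℂ) (μ : Fin s → (Fin n → ℕ))
    (hμ : ∀ i, Antitone (μ i) ∧ IsSlim r n (μ i) ∧ HighestPartition n (g i) (μ i))
    (hdist : Function.Injective μ)
    (ftil : Fin s → MvPolynomial (Fin n) ℂ) (hftil : ∀ i, (ftil i).IsSymmetric) :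
    ((∑ i, Frob r n (ftil i) * g i).IsSymmetric ∧
      ∀ (σ : ℕ → ℕ), (∀ i, σ i ≤ r - 2) → ∀ (x : ℂ) (y : Fin n → ℂ),
        MvPolynomial.eval
          (fun j : Fin n => if (j : ℕ) = 0 then x
            else if (j : ℕ) ≤ k then t ^ (j : ℕ) * q ^ (σ (j : ℕ)) * x else y j)
          (∑ i, Frob r n (ftil i) * g i) = 0)
    ↔ ∀ i : Fin s, ∀ (x : ℂ) (y : Fin n → ℂ),
        MvPolynomial.eval
          (fun j : Fin n => if (j : ℕ) ≤ k then t ^ (j : ℕ) * x else y j)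
          (ftil i) = 0 := by
  have hdeg (i) := FrobeniusWheel.ne_zero_and_lex_degree_eq_of_highestPartition (hμ i).2.2
  refine separating_frobenius_coefficients_general hr hcop ht hq hn
    (fun i => FrobeniusWheel.isSymmetric_of_highestPartition (hμ i).2.2) (fun i => (hdeg i).1)
    (fun i => (hdeg i).2 ▸ (hμ i).2.1) (fun i j hij => hdist ?_) hftil
  exact (hdeg i).2.symm.trans ((congrArg (⇑) hij).trans (hdeg j).2)
end
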